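/- Let d be a positive integer, ν₁, …, ν_d real numbers with ν_j > −1 for each j, set ν = ν₁ + ⋯ + ν_d, let λ be a complex number with Re(λ) + ν > −1 and Re(λ) < d/2 − 1, let a₁, …, a_d > 0 be real and set p = a₁ + ⋯ + a_d. Then ∫₀^∞ e^{−px} x^λ ∏_{j=1}^d I_{ν_j}(a_j x) dx = (Γ(λ+ν+1)/(2^ν p^{λ+ν+1})) · (∏_{j=1}^d a_j^{ν_j}/Γ(ν_j+1)) · ∑_{n₁≥0} ⋯ ∑_{n_d≥0} ((λ+ν+1)/2)_{n₁+⋯+n_d} ((λ+ν)/2+1)_{n₁+⋯+n_d} / ((ν₁+1)_{n₁} ⋯ (ν_d+1)_{n_d}) · ∏_{j=1}^d (a_j²/p²)^{n_j}/(n_j!), and the integral converges absolutely. -/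

import Mathlib

open MeasureTheory Real Finset Complex

/-- The modified Bessel function of the first kind of real order `ν`,
`I_ν(x) = ∑_{k ≥ 0} (x/2)^{ν+2k} / (k! Γ(ν+k+1))` (for `x > 0`). -/
noncomputable def besselI (ν x : ℝ) : ℝ :=
  ∑' k : ℕ, (x / 2) ^ (ν + 2 * (k : ℝ)) / ((k.factorial : ℝ) * Real.Gamma (ν + k + 1))

/-- Real version of `Γ(s + n) = Γ(s) (s)_n`. -/
lemma real_Gamma_add_nat {s : ℝ} (hs : 0 < s) (n : ℕ) :
    Real.Gamma (s + n) = Real.Gamma s * (ascPochhammer ℝ n).eval s := by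
  induction n with
  | zero => simp
  | succ n ih =>
    rw [ascPochhammer_succ_eval, Nat.cast_succ, ← add_assoc,
      Real.Gamma_add_one (by positivity), ih]
    ring

lemma prod_range_eq_Gamma_div {s : ℝ} (hs : 0 < s) (n : ℕ) :
    ∏ j ∈ Finset.range n, (s + j) = Real.Gamma (s + n) / Real.Gamma s := by
  rw [eq_div_iff (Real.Gamma_pos_of_pos hs).ne']
  induction n with
  | zero => simp
  | succ n ih =>
    rw [Finset.prod_range_succ, Nat.cast_succ, ← add_assoc,
      Real.Gamma_add_one (by positivity), ← ih]
    ring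

/-- Lower bound `Γ(ν + k + 1) ≥ c k! (k + 1)^ν`, uniform in `k`. -/
lemma exists_factorial_mul_rpow_le_Gamma {ν : ℝ} (hν : -1 < ν) :
    ∃ C : ℝ, 0 < C ∧ ∀ k : ℕ,
      (k.factorial : ℝ) * ((k : ℝ) + 1) ^ ν ≤ C * Real.Gamma (ν + k + 1) := by
  have hs : 0 < ν + 1 := by linarith
  obtain ⟨M, hM⟩ := (Real.GammaSeq_tendsto_Gamma (ν + 1)).bddAbove_range
  have hG := Real.Gamma_pos_of_pos hs
  refine ⟨(|M| + 1) * (|ν| + 2) ^ 2 / Real.Gamma (ν + 1), by positivity, fun k => ?_⟩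
  have h1 : Real.GammaSeq (ν + 1) (k + 1) ≤ |M| + 1 :=
    (hM ⟨k + 1, rfl⟩).trans ((le_abs_self M).trans (by linarith))
  have hk : (0 : ℝ) ≤ k := Nat.cast_nonneg k
  have hp : 0 < ν + k + 1 := by linarith
  have hp2 : 0 < ν + k + 2 := by linarith
  have hGk := Real.Gamma_pos_of_pos hp
  have hk1 : (0 : ℝ) < (k : ℝ) + 1 := by linarith
  have hGam : Real.Gamma (ν + 1 + ((k + 1 + 1 : ℕ) : ℝ)) =
      (ν + k + 2) * ((ν + k + 1) * Real.Gamma (ν + k + 1)) := by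
    rw [← Real.Gamma_add_one hp.ne', show ν + k + 2 = ν + k + 1 + 1 by ring,
      ← Real.Gamma_add_one (by linarith)]
    congr 1
    push_cast
    ring
  rw [Real.GammaSeq, prod_range_eq_Gamma_div hs, hGam, div_div_eq_mul_div,
    div_le_iff₀ (by positivity), Real.rpow_add_one (by positivity), Nat.factorial_succ] at h1
  push_cast at h1
  have h2 : (ν + k + 2) * (ν + k + 1) ≤ (|ν| + 2) ^ 2 * ((k : ℝ) + 1) ^ 2 := by
    have := le_abs_self ν
    have h0 := abs_nonneg ν
    have e1 : ν + k + 2 ≤ (|ν| + 2) * (k + 1) := by nlinarith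
    have e2 : ν + k + 1 ≤ (|ν| + 2) * (k + 1) := by nlinarith
    calc _ ≤ ((|ν| + 2) * (k + 1)) * ((|ν| + 2) * (k + 1)) := by gcongr
      _ = _ := by ring
  rw [div_mul_eq_mul_div, le_div_iff₀ hG]
  have h3 : ((k.factorial : ℝ) * ((k : ℝ) + 1) ^ ν * Real.Gamma (ν + 1)) * ((k : ℝ) + 1) ^ 2 ≤
      ((|M| + 1) * (|ν| + 2) ^ 2 * Real.Gamma (ν + k + 1)) * ((k : ℝ) + 1) ^ 2 := by
    calc _ = ((k : ℝ) + 1) ^ ν * (k + 1) * ((k + 1) * k.factorial) * Real.Gamma (ν + 1) := by ring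
      _ ≤ _ := h1
      _ = (|M| + 1) * Real.Gamma (ν + k + 1) * ((ν + k + 2) * (ν + k + 1)) := by ring
      _ ≤ (|M| + 1) * Real.Gamma (ν + k + 1) * ((|ν| + 2) ^ 2 * ((k : ℝ) + 1) ^ 2) := by gcongr
      _ = _ := by ring
  exact le_of_mul_le_mul_right h3 (by positivity)

lemma centralBinom_sq_mul_le (k : ℕ) :
    (k.centralBinom : ℝ) ^ 2 * (2 * k + 1) ≤ 16 ^ k := by
  induction k with
  | zero => simp
  | succ k ih =>
    have h := congrArg (Nat.cast : ℕ → ℝ) (Nat.succ_mul_centralBinom_succ k)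
    push_cast at h
    have hk : (0 : ℝ) < (k : ℝ) + 1 := by positivity
    have h' : ((k + 1).centralBinom : ℝ) = 2 * (2 * k + 1) * k.centralBinom / (k + 1) := by
      rw [eq_div_iff hk.ne']; linarith
    rw [h', div_pow, div_mul_eq_mul_div, div_le_iff₀ (by positivity), pow_succ]
    push_cast
    calc _ = ((k.centralBinom : ℝ) ^ 2 * (2 * k + 1)) * (4 * ((2 * k + 1) * (2 * k + 3))) := by ring
      _ ≤ 16 ^ k * (16 * ((k : ℝ) + 1) ^ 2) :=
          mul_le_mul ih (by nlinarith) (by positivity) (by positivity)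
      _ = _ := by ring

lemma factorial_two_mul_mul_sqrt_le (k : ℕ) :
    ((2 * k).factorial : ℝ) * √((k : ℝ) + 1) ≤ 4 ^ k * (k.factorial : ℝ) ^ 2 := by
  have h : ((2 * k).factorial : ℝ) = k.centralBinom * (k.factorial : ℝ) ^ 2 := by
    have := Nat.choose_mul_factorial_mul_factorial (show k ≤ 2 * k by omega)
    rw [show 2 * k - k = k by omega, ← Nat.centralBinom_eq_two_mul_choose] at this
    rw [← this]; push_cast; ring
  have h2 : (k.centralBinom : ℝ) * √((k : ℝ) + 1) ≤ 4 ^ k := by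
    refine le_of_sq_le_sq ?_ (by positivity)
    rw [mul_pow, Real.sq_sqrt (by positivity), ← pow_mul, mul_comm k 2, pow_mul]
    norm_num
    refine le_trans ?_ (centralBinom_sq_mul_le k)
    gcongr
    linarith [Nat.cast_nonneg (α := ℝ) k]
  rw [h]
  calc _ = (k.centralBinom : ℝ) * √((k : ℝ) + 1) * (k.factorial : ℝ) ^ 2 := by ring
    _ ≤ _ := by gcongr

lemma factorial_add_le_mul_pow (m k : ℕ) :
    ((2 * k + m).factorial : ℝ) ≤
      (m + 2 : ℝ) ^ m * ((2 * k).factorial * ((k : ℝ) + 1) ^ m) := by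
  have h := Nat.factorial_mul_ascFactorial (2 * k) m
  have h1 := Nat.ascFactorial_le_pow_add (2 * k) m
  have h2 : (2 * k + m) ^ m ≤ ((m + 2) * (k + 1)) ^ m := by
    apply Nat.pow_le_pow_left; nlinarith
  have : (2 * k + m).factorial ≤ (m + 2) ^ m * ((2 * k).factorial * (k + 1) ^ m) := by
    rw [← h]
    calc _ ≤ (2 * k).factorial * ((m + 2) * (k + 1)) ^ m := Nat.mul_le_mul_left _ (h1.trans h2)
      _ = _ := by rw [mul_pow]; ring
  exact_mod_cast this

lemma rpow_le_pow_add_inv {t μ : ℝ} (ht : 0 < t) (hμ : -1 ≤ μ) {m : ℕ} (hm : μ ≤ m) :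
    t ^ μ ≤ t ^ m + t⁻¹ := by
  have h1 : 0 < t⁻¹ := inv_pos.mpr ht
  have h2 : 0 < t ^ m := pow_pos ht m
  rcases le_total 1 t with h | h
  · have := Real.rpow_le_rpow_of_exponent_le h hm
    rw [Real.rpow_natCast] at this
    linarith
  · have := Real.rpow_le_rpow_of_exponent_ge ht h hμ
    rw [Real.rpow_neg_one] at this
    linarith

/-- The general term of the power series of `I_ν`. -/
noncomputable def besselITerm (ν x : ℝ) (k : ℕ) : ℝ :=
  (x / 2) ^ (ν + 2 * (k : ℝ)) / ((k.factorial : ℝ) * Real.Gamma (ν + k + 1))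

lemma besselITerm_nonneg {ν x : ℝ} (hν : -1 < ν) (hx : 0 < x) (k : ℕ) :
    0 ≤ besselITerm ν x k := by
  have hk : (0 : ℝ) ≤ k := Nat.cast_nonneg k
  have := Real.Gamma_pos_of_pos (show 0 < ν + k + 1 by linarith)
  unfold besselITerm
  positivity

/-- Comparison of the terms of `I_ν` with terms of the exponential series. -/
lemma exists_besselITerm_le {ν : ℝ} (hν : -1 < ν) :
    ∃ (C : ℝ) (m : ℕ), 0 < C ∧ ∀ x : ℝ, 0 < x → ∀ k : ℕ,
      √x * besselITerm ν x k ≤ C * (x ^ (2 * k + m) / (2 * k + m).factorial +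
        (x⁻¹ * (x ^ (2 * k) / (2 * k).factorial) +
          x ^ (2 * k - 1) / (2 * k - 1).factorial)) := by
  obtain ⟨C, hC, hCk⟩ := exists_factorial_mul_rpow_le_Gamma hν
  obtain ⟨m, hm⟩ := exists_nat_ge (ν + 1 / 2)
  have hpow : (0 : ℝ) < 2 ^ (-ν) := by positivity
  refine ⟨C * 2 ^ (-ν) * (m + 2 : ℝ) ^ m, m, by positivity, fun x hx k => ?_⟩
  have hk : (0 : ℝ) ≤ k := Nat.cast_nonneg k
  have hk1 : (0 : ℝ) < (k : ℝ) + 1 := by linarith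
  have hG := Real.Gamma_pos_of_pos (show 0 < ν + k + 1 by linarith)
  have hF : (0 : ℝ) < k.factorial := by positivity
  have hF2 : (0 : ℝ) < (2 * k).factorial := by positivity
  have hden : ((2 * k).factorial : ℝ) * ((k : ℝ) + 1) ^ (ν + 1 / 2) ≤
      C * 4 ^ k * (k.factorial * Real.Gamma (ν + k + 1)) := by
    calc _ = ((2 * k).factorial * √((k : ℝ) + 1)) * ((k : ℝ) + 1) ^ ν := by
          rw [Real.rpow_add hk1, Real.sqrt_eq_rpow]; ring
      _ ≤ (4 ^ k * (k.factorial : ℝ) ^ 2) * ((k : ℝ) + 1) ^ ν :=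
          mul_le_mul_of_nonneg_right (factorial_two_mul_mul_sqrt_le k) (by positivity)
      _ = 4 ^ k * k.factorial * (k.factorial * ((k : ℝ) + 1) ^ ν) := by ring
      _ ≤ 4 ^ k * k.factorial * (C * Real.Gamma (ν + k + 1)) :=
          mul_le_mul_of_nonneg_left (hCk k) (by positivity)
      _ = _ := by ring
  have hnum : √x * (x / 2) ^ (ν + 2 * (k : ℝ)) =
      x ^ (2 * k) * x ^ (ν + 1 / 2) * 2 ^ (-ν) / 4 ^ k := by
    rw [Real.div_rpow hx.le zero_le_two, Real.rpow_add hx, Real.rpow_add two_pos,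
      Real.rpow_add hx, Real.rpow_neg zero_le_two, ← Real.sqrt_eq_rpow,
      show (2 * (k : ℝ)) = ((2 * k : ℕ) : ℝ) by push_cast; ring, Real.rpow_natCast,
      Real.rpow_natCast, pow_mul 2 2 k]
    norm_num
    field_simp
  have hmain : √x * besselITerm ν x k ≤
      C * 2 ^ (-ν) * (x ^ (2 * k) / (2 * k).factorial * (x / (k + 1)) ^ (ν + 1 / 2)) := by
    unfold besselITerm
    rw [← mul_div_assoc, hnum, div_div, Real.div_rpow hx.le hk1.le, div_mul_div_comm,
      ← mul_div_assoc, div_le_div_iff₀ (by positivity) (by positivity)]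
    calc _ ≤ x ^ (2 * k) * x ^ (ν + 1 / 2) * 2 ^ (-ν) *
          (C * 4 ^ k * (k.factorial * Real.Gamma (ν + k + 1))) := by gcongr
      _ = _ := by ring
  have hA : x ^ (2 * k) / (2 * k).factorial * (x / (k + 1)) ^ m ≤
      (m + 2 : ℝ) ^ m * (x ^ (2 * k + m) / (2 * k + m).factorial) := by
    rw [div_pow, div_mul_div_comm, ← pow_add, ← mul_div_assoc,
      div_le_div_iff₀ (by positivity) (by positivity)]
    calc _ ≤ x ^ (2 * k + m) * ((m + 2 : ℝ) ^ m * ((2 * k).factorial * ((k : ℝ) + 1) ^ m)) := by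
          gcongr; exact factorial_add_le_mul_pow m k
      _ = _ := by ring
  have hB : x ^ (2 * k) / (2 * k).factorial * (x / (k + 1))⁻¹ ≤
      x⁻¹ * (x ^ (2 * k) / (2 * k).factorial) + x ^ (2 * k - 1) / (2 * k - 1).factorial := by
    rcases k with _ | k
    · simp
    · have : x ^ (2 * (k + 1)) / (2 * (k + 1)).factorial * (x / ((k + 1 : ℕ) + 1))⁻¹ ≤
          x ^ (2 * (k + 1) - 1) / (2 * (k + 1) - 1).factorial := by
        rw [show 2 * (k + 1) - 1 = 2 * k + 1 by omega, show 2 * (k + 1) = 2 * k + 1 + 1 by ring,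
          Nat.factorial_succ (2 * k + 1), inv_div, div_mul_div_comm,
          div_le_div_iff₀ (by positivity) (by positivity), pow_succ x (2 * k + 1)]
        push_cast
        have hk : (0 : ℝ) ≤ k := Nat.cast_nonneg k
        have : (k : ℝ) + 1 + 1 ≤ 2 * k + 1 + 1 := by linarith
        calc _ = x ^ (2 * k + 1) * x * (2 * k + 1).factorial * ((k : ℝ) + 1 + 1) := by ring
          _ ≤ x ^ (2 * k + 1) * x * (2 * k + 1).factorial * (2 * k + 1 + 1) := by gcongr
          _ = _ := by ring
      have h0 : 0 ≤ x⁻¹ * (x ^ (2 * (k + 1)) / (2 * (k + 1)).factorial) := by positivity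
      linarith
  have hone : (1 : ℝ) ≤ (m + 2 : ℝ) ^ m := one_le_pow₀ (by linarith [Nat.cast_nonneg (α := ℝ) m])
  refine hmain.trans ?_
  rw [mul_assoc _ ((m + 2 : ℝ) ^ m)]
  refine mul_le_mul_of_nonneg_left ?_ (by positivity)
  calc _ ≤ x ^ (2 * k) / (2 * k).factorial * ((x / (k + 1)) ^ m + (x / (k + 1))⁻¹) := by
        gcongr
        exact rpow_le_pow_add_inv (by positivity) (by linarith) hm
    _ ≤ (m + 2 : ℝ) ^ m * (x ^ (2 * k + m) / (2 * k + m).factorial) +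
        1 * (x⁻¹ * (x ^ (2 * k) / (2 * k).factorial) +
          x ^ (2 * k - 1) / (2 * k - 1).factorial) := by
        rw [mul_add, one_mul]; exact add_le_add hA hB
    _ ≤ _ := by
        rw [mul_add ((m + 2 : ℝ) ^ m)]
        refine add_le_add le_rfl (mul_le_mul_of_nonneg_right hone ?_)
        positivity

lemma summable_and_tsum_comp_exp_le {x : ℝ} (hx : 0 < x) {i : ℕ → ℕ} (hi : i.Injective) :
    Summable (fun k => x ^ i k / (i k).factorial) ∧
      ∑' k, x ^ i k / ((i k).factorial : ℝ) ≤ Real.exp x := by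
  have h := Real.summable_pow_div_factorial x
  refine ⟨h.comp_injective hi, ?_⟩
  rw [Real.exp_eq_exp_ℝ, NormedSpace.exp_eq_tsum_div]
  exact tsum_comp_le_tsum_of_inj h (fun n => by positivity) hi

lemma exists_besselI_le {ν : ℝ} (hν : -1 < ν) :
    ∃ C : ℝ, 0 < C ∧ ∀ x : ℝ, 0 < x →
      Summable (besselITerm ν x) ∧ √x * besselI ν x ≤ C * (2 + x⁻¹) * Real.exp x := by
  obtain ⟨C, m, hC, h⟩ := exists_besselITerm_le hν
  refine ⟨C, hC, fun x hx => ?_⟩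
  obtain ⟨s1, t1⟩ := summable_and_tsum_comp_exp_le hx (i := fun k => 2 * k + m)
    (fun a b h => by simp at h; omega)
  obtain ⟨s2, t2⟩ := summable_and_tsum_comp_exp_le hx (i := fun k => 2 * k)
    (fun a b h => by simp at h; omega)
  obtain ⟨s3, t3⟩ := summable_and_tsum_comp_exp_le hx (i := fun k => 2 * k - 1)
    (fun a b h => by simp at h; omega)
  have hs := (s1.add ((s2.mul_left x⁻¹).add s3)).mul_left C
  have hsq : 0 < √x := Real.sqrt_pos.mpr hx
  have hs' : Summable fun k => √x * besselITerm ν x k :=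
    Summable.of_nonneg_of_le (fun k => mul_nonneg hsq.le (besselITerm_nonneg hν hx k)) (h x hx) hs
  refine ⟨(summable_mul_left_iff hsq.ne').mp hs', ?_⟩
  have := hs'.tsum_le_tsum (h x hx) hs
  rw [tsum_mul_left, tsum_mul_left, s1.tsum_add ((s2.mul_left x⁻¹).add s3),
    (s2.mul_left x⁻¹).tsum_add s3, tsum_mul_left] at this
  refine this.trans ?_
  rw [mul_assoc]
  gcongr
  have : x⁻¹ * ∑' k, x ^ (2 * k) / ((2 * k).factorial : ℝ) ≤ x⁻¹ * Real.exp x := by gcongr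
  linarith

lemma summable_besselITerm {ν x : ℝ} (hν : -1 < ν) (hx : 0 < x) : Summable (besselITerm ν x) :=
  ((exists_besselI_le hν).choose_spec.2 x hx).1

lemma besselI_nonneg {ν x : ℝ} (hν : -1 < ν) (hx : 0 < x) : 0 ≤ besselI ν x :=
  tsum_nonneg (besselITerm_nonneg hν hx)

lemma besselI_mul_le_of_le_one {ν a x : ℝ} (hν : -1 < ν) (ha : 0 < a) (hx : 0 < x) (hx1 : x ≤ 1) :
    besselI ν (a * x) ≤ besselI ν a * x ^ ν := by
  rw [besselI, besselI, ← tsum_mul_right]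
  refine (summable_besselITerm hν (mul_pos ha hx)).tsum_le_tsum (fun k => ?_)
    ((summable_besselITerm hν ha).mul_right _)
  have hk : (0 : ℝ) ≤ k := Nat.cast_nonneg k
  have hG := Real.Gamma_pos_of_pos (show 0 < ν + k + 1 by linarith)
  rw [div_mul_eq_mul_div]
  gcongr
  rw [mul_div_right_comm, Real.mul_rpow (by positivity) hx.le]
  gcongr ?_ * ?_
  exact Real.rpow_le_rpow_of_exponent_ge hx hx1 (by linarith)

lemma exists_besselI_mul_le_of_one_le {ν a : ℝ} (hν : -1 < ν) (ha : 0 < a) :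
    ∃ C : ℝ, 0 < C ∧ ∀ x : ℝ, 1 ≤ x →
      besselI ν (a * x) ≤ C * (Real.exp (a * x) * x ^ (-(1 / 2) : ℝ)) := by
  obtain ⟨C, hC, h⟩ := exists_besselI_le hν
  refine ⟨C * (2 + a⁻¹) / √a, by positivity, fun x hx => ?_⟩
  have hx0 : 0 < x := by linarith
  have := (h (a * x) (by positivity)).2
  have hinv : (a * x)⁻¹ ≤ a⁻¹ := by
    gcongr; nlinarith
  rw [Real.rpow_neg hx0.le, ← Real.sqrt_eq_rpow]
  have hsx : 0 < √x := Real.sqrt_pos.mpr hx0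
  have hsa : 0 < √a := Real.sqrt_pos.mpr ha
  rw [Real.sqrt_mul ha.le] at this
  have h3 : √a * √x * besselI ν (a * x) ≤ C * (2 + a⁻¹) * Real.exp (a * x) :=
    this.trans (by gcongr)
  have : C * (2 + a⁻¹) / √a * (Real.exp (a * x) * (√x)⁻¹) =
      C * (2 + a⁻¹) * Real.exp (a * x) / (√a * √x) := by field_simp
  rw [this, le_div_iff₀ (by positivity)]
  linarith

lemma aemeasurable_besselI_mul {ν a : ℝ} (hν : -1 < ν) (ha : 0 < a) :
    AEMeasurable (fun x => besselI ν (a * x)) (volume.restrict (Set.Ioi 0)) := by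
  refine aemeasurable_of_tendsto_metrizable_ae' (f := fun N x => ∑ k ∈ Finset.range N,
    besselITerm ν (a * x) k) (fun N => ?_) ?_
  · unfold besselITerm
    fun_prop
  · refine (ae_restrict_mem measurableSet_Ioi).mono fun x hx => ?_
    exact (summable_besselITerm hν (mul_pos ha hx)).hasSum.tendsto_sum_nat

/-- A finite product of convergent series of nonnegative reals is the sum over multi-indices. -/
lemma hasSum_prod_of_nonneg {d : ℕ} (f : Fin d → ℕ → ℝ) (h0 : ∀ j k, 0 ≤ f j k)
    (hs : ∀ j, Summable (f j)) :
    HasSum (fun n : Fin d → ℕ => ∏ j, f j (n j)) (∏ j, ∑' k, f j k) := by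
  induction d with
  | zero => simp
  | succ d ih =>
    set g : (Fin d → ℕ) → ℝ := fun n => ∏ j, f j.succ (n j) with hg
    have h : HasSum g (∏ j : Fin d, ∑' k, f j.succ k) :=
      ih (fun j => f j.succ) (fun j => h0 j.succ) (fun j => hs j.succ)
    have hnn : 0 ≤ g := fun n => Finset.prod_nonneg fun j _ => h0 j.succ (n j)
    have h00 : 0 ≤ f 0 := h0 0
    have hm := (hs 0).hasSum.mul h (Summable.mul_of_nonneg (hs 0) h.summable h00 hnn)
    have he : (fun n : Fin (d + 1) → ℕ => ∏ j, f j (n j)) ∘ (Fin.consEquiv fun _ => ℕ) =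
        fun x : ℕ × (Fin d → ℕ) => f 0 x.1 * g x.2 := by
      funext x
      simp [Fin.prod_univ_succ, hg, Fin.consEquiv]
    rw [Fin.prod_univ_succ, ← (Fin.consEquiv fun _ => ℕ).hasSum_iff, he]
    exact hm

lemma complex_Gamma_add_two_mul_nat {s : ℂ} (hs : 0 < s.re) (N : ℕ) :
    Complex.Gamma (s + 2 * N) = Complex.Gamma s * 4 ^ N *
      ((ascPochhammer ℂ N).eval (s / 2) * (ascPochhammer ℂ N).eval ((s + 1) / 2)) := by
  induction N with
  | zero => simp
  | succ N ih =>
    have hne : ∀ t : ℂ, 0 < t.re → t ≠ 0 := fun t ht h => by simp [h] at ht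
    have hre : 0 < (s + 2 * N).re := by
      have : (s + 2 * N).re = s.re + 2 * N := by simp
      rw [this]; positivity
    have hre1 : 0 < (s + 2 * N + 1).re := by
      rw [Complex.add_re, Complex.one_re]; positivity
    rw [show s + 2 * ((N + 1 : ℕ) : ℂ) = s + 2 * N + 1 + 1 by push_cast; ring,
      Complex.Gamma_add_one _ (hne _ hre1), Complex.Gamma_add_one _ (hne _ hre), ih,
      ascPochhammer_succ_eval, ascPochhammer_succ_eval]
    ring

lemma besselITerm_mul {ν a x : ℝ} (ha : 0 < a) (hx : 0 < x) (k : ℕ) :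
    besselITerm ν (a * x) k = besselITerm ν a k * x ^ (ν + 2 * (k : ℝ)) := by
  rw [besselITerm, besselITerm, mul_div_right_comm, Real.mul_rpow (by positivity) hx.le]
  ring

lemma prod_besselITerm_mul {d : ℕ} {ν a : Fin d → ℝ} (ha : ∀ j, 0 < a j) {x : ℝ} (hx : 0 < x)
    (n : Fin d → ℕ) :
    ∏ j, besselITerm (ν j) (a j * x) (n j) =
      (∏ j, besselITerm (ν j) (a j) (n j)) *
        x ^ (∑ j, ν j + 2 * ((∑ j, n j : ℕ) : ℝ)) := by
  simp_rw [besselITerm_mul (ha _) hx, Finset.prod_mul_distrib]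
  rw [← Real.rpow_sum_of_pos hx, Finset.sum_add_distrib, ← Finset.mul_sum]
  push_cast
  rfl

lemma besselITerm_eq {ν a p : ℝ} (hν : -1 < ν) (ha : 0 < a) (hp : 0 < p) (k : ℕ) :
    besselITerm ν a k = a ^ ν / Real.Gamma (ν + 1) * (2 ^ ν)⁻¹ * (p ^ 2 / 4) ^ k *
      ((a ^ 2 / p ^ 2) ^ k / k.factorial) / (ascPochhammer ℝ k).eval (ν + 1) := by
  have hs : 0 < ν + 1 := by linarith
  have h1 := (ascPochhammer_pos k (ν + 1) hs).ne'
  have h2 := (Real.Gamma_pos_of_pos hs).ne'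
  have h3 : (2 : ℝ) ^ ν ≠ 0 := by positivity
  rw [besselITerm, show ν + k + 1 = ν + 1 + k by ring, real_Gamma_add_nat hs,
    Real.div_rpow ha.le zero_le_two, Real.rpow_add ha, Real.rpow_add two_pos,
    show (2 * (k : ℝ)) = ((2 * k : ℕ) : ℝ) by push_cast; ring, Real.rpow_natCast,
    Real.rpow_natCast, pow_mul, pow_mul, div_pow, div_pow]
  norm_num
  field_simp

lemma prod_besselITerm_eq {d : ℕ} {ν a : Fin d → ℝ} (hν : ∀ j, -1 < ν j) (ha : ∀ j, 0 < a j)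
    {p : ℝ} (hp : 0 < p) (n : Fin d → ℕ) :
    ∏ j, besselITerm (ν j) (a j) (n j) =
      (∏ j, a j ^ ν j / Real.Gamma (ν j + 1)) * (2 ^ (∑ j, ν j))⁻¹ * (p ^ 2 / 4) ^ (∑ j, n j) *
        (∏ j, (a j ^ 2 / p ^ 2) ^ n j / (n j).factorial) /
          ∏ j, (ascPochhammer ℝ (n j)).eval (ν j + 1) := by
  simp_rw [besselITerm_eq (hν _) (ha _) hp]
  rw [Finset.prod_div_distrib, Finset.prod_mul_distrib, Finset.prod_mul_distrib,
    Finset.prod_mul_distrib, Finset.prod_pow_eq_pow_sum, Finset.prod_inv_distrib,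
    Real.rpow_sum_of_pos two_pos]

/-- Termwise integration of the expansion of the integrand. -/
lemma integral_exp_cpow_prod_besselITerm {d : ℕ} {ν a : Fin d → ℝ} (hν : ∀ j, -1 < ν j)
    (ha : ∀ j, 0 < a j) {p : ℝ} (hp : 0 < p) {lam : ℂ} (hl : -1 < lam.re + ∑ j, ν j)
    (n : Fin d → ℕ) :
    (∫ x in Set.Ioi (0 : ℝ), Complex.exp (-(p : ℂ) * x) * (x : ℂ) ^ lam *
        ((∏ j, besselITerm (ν j) (a j * x) (n j) : ℝ) : ℂ)) =
      Complex.Gamma (lam + (∑ j, ν j : ℝ) + 1) /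
          ((2 : ℂ) ^ ((∑ j, ν j : ℝ) : ℂ) * (p : ℂ) ^ (lam + (∑ j, ν j : ℝ) + 1)) *
        (∏ j, ((a j ^ (ν j) / Real.Gamma (ν j + 1) : ℝ) : ℂ)) *
          ((ascPochhammer ℂ (∑ j, n j)).eval ((lam + (∑ j, ν j : ℝ) + 1) / 2) *
            (ascPochhammer ℂ (∑ j, n j)).eval ((lam + (∑ j, ν j : ℝ)) / 2 + 1) /
            (∏ j, (((ascPochhammer ℝ (n j)).eval (ν j + 1) : ℝ) : ℂ)) *
            ∏ j, (((a j ^ 2 / p ^ 2 : ℝ) : ℂ) ^ (n j) / ((n j).factorial : ℂ))) := by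
  set σ := ∑ j, ν j with hσ
  set N := ∑ j, n j with hN
  have hsre : 0 < (lam + (σ : ℂ) + 1).re := by
    simp; linarith
  have hre : 0 < (lam + (σ : ℂ) + 1 + 2 * N).re := by
    have : (lam + (σ : ℂ) + 1 + 2 * N).re = (lam + (σ : ℂ) + 1).re + 2 * N := by simp
    rw [this]; positivity
  have hpc : (p : ℂ) ≠ 0 := by exact_mod_cast hp.ne'
  have h1 : (∫ x in Set.Ioi (0 : ℝ), Complex.exp (-(p : ℂ) * x) * (x : ℂ) ^ lam *
        ((∏ j, besselITerm (ν j) (a j * x) (n j) : ℝ) : ℂ)) =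
      ∫ x in Set.Ioi (0 : ℝ), ((∏ j, besselITerm (ν j) (a j) (n j) : ℝ) : ℂ) *
        ((x : ℂ) ^ (lam + (σ : ℂ) + 1 + 2 * N - 1) * Complex.exp (-(p * x))) := by
    refine setIntegral_congr_fun measurableSet_Ioi fun x hx => ?_
    have hx0 : (0 : ℝ) < x := hx
    have hxc : (x : ℂ) ≠ 0 := by exact_mod_cast hx0.ne'
    rw [prod_besselITerm_mul ha hx0, Complex.ofReal_mul, Complex.ofReal_cpow hx0.le,
      show lam + (σ : ℂ) + 1 + 2 * N - 1 = lam + ((σ + 2 * (N : ℝ) : ℝ) : ℂ) by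
        push_cast; ring, Complex.cpow_add _ _ hxc, neg_mul]
    ring
  rw [h1, integral_const_mul, Complex.integral_cpow_mul_exp_neg_mul_Ioi hre hp,
    complex_Gamma_add_two_mul_nat hsre, prod_besselITerm_eq hν ha hp, one_div,
    Complex.inv_cpow _ _ (by rw [Complex.arg_ofReal_of_nonneg hp.le]; exact Real.pi_pos.ne),
    Complex.cpow_add _ _ hpc,
    show (2 * (N : ℂ)) = ((2 * N : ℕ) : ℂ) by push_cast; rfl, Complex.cpow_natCast, pow_mul,
    show (lam + (σ : ℂ)) / 2 + 1 = (lam + (σ : ℂ) + 1 + 1) / 2 by ring, ← hσ, ← hN]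
  push_cast [Complex.ofReal_cpow zero_le_two]
  have h4 : (p : ℂ) ^ (lam + (σ : ℂ) + 1) ≠ 0 := by simp [Complex.cpow_eq_zero_iff, hpc]
  have h5 : (2 : ℂ) ^ (σ : ℂ) ≠ 0 := by simp [Complex.cpow_eq_zero_iff]
  rw [div_pow]
  field_simp

/-- The integrand of the Laplace transform is absolutely integrable on `(0, ∞)`. -/
lemma integrableOn_exp_cpow_prod_besselI {d : ℕ} {ν a : Fin d → ℝ} (hν : ∀ j, -1 < ν j)
    (ha : ∀ j, 0 < a j) {lam : ℂ} (hl : -1 < lam.re + ∑ j, ν j)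
    {p : ℝ} (hp : p = ∑ j, a j) (hl2 : lam.re < (d : ℝ) / 2 - 1) :
    IntegrableOn (fun x : ℝ => Complex.exp (-(p : ℂ) * x) * (x : ℂ) ^ lam *
        ∏ j, (besselI (ν j) (a j * x) : ℂ)) (Set.Ioi 0) := by
  have hmeas : AEStronglyMeasurable (fun x : ℝ => Complex.exp (-(p : ℂ) * x) * (x : ℂ) ^ lam *
        ∏ j, (besselI (ν j) (a j * x) : ℂ)) (volume.restrict (Set.Ioi 0)) := by
    refine AEMeasurable.aestronglyMeasurable ?_
    refine AEMeasurable.mul (by fun_prop) (Finset.aemeasurable_fun_prod _ fun j _ => ?_)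
    exact Complex.measurable_ofReal.comp_aemeasurable (aemeasurable_besselI_mul (hν j) (ha j))
  have hp0 : 0 ≤ p := hp ▸ Finset.sum_nonneg fun j _ => (ha j).le
  have hnorm : ∀ x : ℝ, 0 < x → ‖Complex.exp (-(p : ℂ) * x) * (x : ℂ) ^ lam *
        ∏ j, (besselI (ν j) (a j * x) : ℂ)‖ =
      Real.exp (-(p * x)) * x ^ lam.re * ∏ j, besselI (ν j) (a j * x) := fun x hx => by
    rw [norm_mul, norm_mul, Complex.norm_exp, Complex.norm_cpow_eq_rpow_re_of_pos hx,
      ← Complex.ofReal_prod, Complex.norm_real, Real.norm_of_nonneg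
        (Finset.prod_nonneg fun j _ => besselI_nonneg (hν j) (mul_pos (ha j) hx))]
    simp
  rw [← Set.Ioc_union_Ioi_eq_Ioi zero_le_one, integrableOn_union]
  constructor
  · refine Integrable.mono' (g := fun x => (∏ j, besselI (ν j) (a j)) * x ^ (lam.re + ∑ j, ν j))
      ?_ (hmeas.mono_measure (Measure.restrict_mono Set.Ioc_subset_Ioi_self le_rfl)) ?_
    · refine Integrable.const_mul ?_ _
      exact (intervalIntegral.intervalIntegrable_rpow' hl).1
    · refine (ae_restrict_mem measurableSet_Ioc).mono fun x hx => ?_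
      rw [hnorm x hx.1, Real.rpow_add hx.1, Real.rpow_sum_of_pos hx.1]
      have hprod : ∏ j, besselI (ν j) (a j * x) ≤ ∏ j, besselI (ν j) (a j) * x ^ ν j :=
        Finset.prod_le_prod (fun j _ => besselI_nonneg (hν j) (mul_pos (ha j) hx.1))
          fun j _ => besselI_mul_le_of_le_one (hν j) (ha j) hx.1 hx.2
      rw [Finset.prod_mul_distrib] at hprod
      have he : Real.exp (-(p * x)) ≤ 1 := by
        rw [Real.exp_le_one_iff, neg_nonpos]; exact mul_nonneg hp0 hx.1.le
      have hxr : 0 ≤ x ^ lam.re := Real.rpow_nonneg hx.1.le _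
      have hpn : 0 ≤ ∏ j, besselI (ν j) (a j * x) :=
        Finset.prod_nonneg fun j _ => besselI_nonneg (hν j) (mul_pos (ha j) hx.1)
      calc _ ≤ 1 * x ^ lam.re * ((∏ j, besselI (ν j) (a j)) * ∏ j, x ^ ν j) := by gcongr
        _ = _ := by ring
  · choose C hC hCle using fun j => exists_besselI_mul_le_of_one_le (hν j) (ha j)
    refine Integrable.mono' (g := fun x => (∏ j, C j) * x ^ (lam.re - d / 2))
      ?_ (hmeas.mono_measure (Measure.restrict_mono (Set.Ioi_subset_Ioi zero_le_one) le_rfl)) ?_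
    · refine Integrable.const_mul ?_ _
      exact integrableOn_Ioi_rpow_of_lt (by linarith) one_pos
    · refine (ae_restrict_mem measurableSet_Ioi).mono fun x hx => ?_
      have hx1 : 1 < x := hx
      have hx0 : 0 < x := by linarith
      rw [hnorm x hx0]
      have hprod : ∏ j, besselI (ν j) (a j * x) ≤
          ∏ j, C j * (Real.exp (a j * x) * x ^ (-(1 / 2) : ℝ)) :=
        Finset.prod_le_prod (fun j _ => besselI_nonneg (hν j) (mul_pos (ha j) hx0))
          fun j _ => hCle j x hx1.le
      rw [Finset.prod_mul_distrib, Finset.prod_mul_distrib, ← Real.exp_sum, ← Finset.sum_mul,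
        ← hp, Finset.prod_const, Finset.card_univ, Fintype.card_fin, ← Real.rpow_natCast,
        ← Real.rpow_mul hx0.le] at hprod
      calc _ ≤ Real.exp (-(p * x)) * x ^ lam.re *
            ((∏ j, C j) * (Real.exp (p * x) * x ^ (-(1 / 2) * (d : ℝ)))) := by gcongr
        _ = (Real.exp (-(p * x)) * Real.exp (p * x)) *
            ((∏ j, C j) * (x ^ lam.re * x ^ (-(1 / 2) * (d : ℝ)))) := by ring
        _ = _ := by
          rw [← Real.exp_add, ← Real.rpow_add hx0]
          simp only [neg_add_cancel, Real.exp_zero, one_mul]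
          congr 2
          ring

/-- Dominated termwise integration: if the norms of `G i` have partial sums bounded by an
integrable function and `∑ G i = F` almost everywhere, then `∫ F = ∑ ∫ G i`. -/
lemma hasSum_integral_of_sum_norm_le {α ι : Type*} [Countable ι] [MeasurableSpace α]
    {μ : Measure α} {F : α → ℂ} {B : α → ℝ} {G : ι → α → ℂ} (hB : Integrable B μ)
    (hG : ∀ i, AEStronglyMeasurable (G i) μ)
    (hle : ∀ s : Finset ι, ∀ᵐ x ∂μ, ∑ i ∈ s, ‖G i x‖ ≤ B x)
    (hsum : ∀ᵐ x ∂μ, HasSum (fun i => G i x) (F x)) :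
    HasSum (fun i => ∫ x, G i x ∂μ) (∫ x, F x ∂μ) := by
  have hGi : ∀ i, Integrable (G i) μ := fun i =>
    hB.mono' (hG i) ((hle {i}).mono fun x hx => by simpa using hx)
  have hs : Summable fun i => ∫ x, ‖G i x‖ ∂μ := by
    refine summable_of_sum_le (c := ∫ x, B x ∂μ)
      (fun i => integral_nonneg fun x => norm_nonneg _) fun s => ?_
    rw [← integral_finsetSum _ fun i _ => (hGi i).norm]
    exact integral_mono_ae (integrable_finsetSum _ fun i _ => (hGi i).norm) hB (hle s)
  have h := hasSum_integral_of_summable_integral_norm hGi hs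
  rwa [integral_congr_ae (hsum.mono fun x hx => hx.tsum_eq)] at h

/-- Corrected Laplace transform formula (boundary case `p = a₁ + ⋯ + a_d`, `Re λ < d/2 - 1`):
`∫₀^∞ e^{-px} x^λ ∏_j I_{ν_j}(a_j x) dx = Γ(λ+ν+1)/(2^ν p^{λ+ν+1}) ⬝ ∏_j a_j^{ν_j}/Γ(ν_j+1)
  ⬝ F_C^{(d)}((λ+ν+1)/2, (λ+ν)/2+1; ν₁+1, …, ν_d+1; a₁²/p², …, a_d²/p²)`,
with the integral converging absolutely. -/
theorem laplace_transform_prod_besselI_boundary (d : ℕ) (hd : 0 < d) (ν : Fin d → ℝ)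
    (hν : ∀ j, -1 < ν j) (lam : ℂ) (hl : -1 < lam.re + ∑ j, ν j)
    (a : Fin d → ℝ) (ha : ∀ j, 0 < a j) (p : ℝ) (hp : p = ∑ j, a j) (hl2 : lam.re < (d : ℝ) / 2 - 1) :
    IntegrableOn
      (fun x : ℝ => Complex.exp (-(p : ℂ) * x) * (x : ℂ) ^ lam *
        ∏ j, (besselI (ν j) (a j * x) : ℂ)) (Set.Ioi 0) ∧
    (∫ x in Set.Ioi (0 : ℝ), Complex.exp (-(p : ℂ) * x) * (x : ℂ) ^ lam *
        ∏ j, (besselI (ν j) (a j * x) : ℂ)) =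
      Complex.Gamma (lam + (∑ j, ν j : ℝ) + 1) /
          ((2 : ℂ) ^ ((∑ j, ν j : ℝ) : ℂ) * (p : ℂ) ^ (lam + (∑ j, ν j : ℝ) + 1)) *
        (∏ j, ((a j ^ (ν j) / Real.Gamma (ν j + 1) : ℝ) : ℂ)) *
        ∑' n : Fin d → ℕ,
          (ascPochhammer ℂ (∑ j, n j)).eval ((lam + (∑ j, ν j : ℝ) + 1) / 2) *
            (ascPochhammer ℂ (∑ j, n j)).eval ((lam + (∑ j, ν j : ℝ)) / 2 + 1) /
            (∏ j, (((ascPochhammer ℝ (n j)).eval (ν j + 1) : ℝ) : ℂ)) *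
            ∏ j, (((a j ^ 2 / p ^ 2 : ℝ) : ℂ) ^ (n j) / ((n j).factorial : ℂ)) := by
  have hInt := integrableOn_exp_cpow_prod_besselI hν ha hl hp hl2
  refine ⟨hInt, ?_⟩
  have hp0 : 0 < p := by
    have : Nonempty (Fin d) := ⟨⟨0, hd⟩⟩
    exact hp ▸ Finset.sum_pos (fun j _ => ha j) Finset.univ_nonempty
  have hprod : ∀ x : ℝ, 0 < x → HasSum
      (fun n : Fin d → ℕ => ∏ j, besselITerm (ν j) (a j * x) (n j))
      (∏ j, besselI (ν j) (a j * x)) := fun x hx =>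
    hasSum_prod_of_nonneg (fun j => besselITerm (ν j) (a j * x))
      (fun j => besselITerm_nonneg (hν j) (mul_pos (ha j) hx))
      fun j => summable_besselITerm (hν j) (mul_pos (ha j) hx)
  have hnn : ∀ x : ℝ, 0 < x → ∀ n : Fin d → ℕ,
      0 ≤ ∏ j, besselITerm (ν j) (a j * x) (n j) := fun x hx n =>
    Finset.prod_nonneg fun j _ => besselITerm_nonneg (hν j) (mul_pos (ha j) hx) _
  have key := hasSum_integral_of_sum_norm_le (μ := volume.restrict (Set.Ioi (0 : ℝ)))
    (F := fun x : ℝ => Complex.exp (-(p : ℂ) * x) * (x : ℂ) ^ lam *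
        ∏ j, (besselI (ν j) (a j * x) : ℂ))
    (G := fun (n : Fin d → ℕ) (x : ℝ) => Complex.exp (-(p : ℂ) * x) * (x : ℂ) ^ lam *
        ((∏ j, besselITerm (ν j) (a j * x) (n j) : ℝ) : ℂ))
    hInt.norm (fun n => ?_) (fun s => ?_) ?_
  · rw [← key.tsum_eq, ← tsum_mul_left]
    exact tsum_congr fun n => integral_exp_cpow_prod_besselITerm hν ha hp0 hl n
  · refine Measurable.aestronglyMeasurable ?_
    unfold besselITerm
    fun_prop
  · refine (ae_restrict_mem measurableSet_Ioi).mono fun x hx => ?_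
    simp only [norm_mul _ (Complex.ofReal _), Complex.norm_real,
      Real.norm_of_nonneg (hnn x hx _), ← Finset.mul_sum, ← Complex.ofReal_prod]
    rw [Real.norm_of_nonneg ((hprod x hx).nonneg (hnn x hx))]
    exact mul_le_mul_of_nonneg_left (sum_le_hasSum s (fun n _ => hnn x hx n) (hprod x hx))
      (norm_nonneg _)
  · refine (ae_restrict_mem measurableSet_Ioi).mono fun x hx => ?_
    have := (Complex.hasSum_ofReal.mpr (hprod x hx)).mul_left
      (Complex.exp (-(p : ℂ) * x) * (x : ℂ) ^ lam)
    rwa [Complex.ofReal_prod] at this
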